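/- Let k ≥ 1 be an integer and let v = (v₁, v₂) with v₁, v₂ ∈ P_k be such that v(z) = 0 for every z ∈ ∂T̂. Then ∫_{T̂} div v = 0 and (div v)(âᵢ) = 0 for i = 1,2,3; in other words, div maps V_I(T̂) into Q_I(T̂). -/

import Mathlib

/-!
On each side of `Tref`, the function `v` vanishes, so at a vertex the derivative of each component
vanishes in the directions of the two sides meeting there. These directions span the plane, so the
full derivative, and hence `pdiv v`, is zero at every vertex (`fderiv_apply_eq_zero_of_edge`).

For the mean value, Fubini reduces `∫ ∂₁v₁` over `Tref` to the integrals over horizontal chords,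
each of which is a difference of two boundary values of `v₁` by the fundamental theorem of calculus
(`setIntegral_Tref_eq_zero`); `∫ ∂₂v₂` is the same statement after swapping coordinates.

The partial derivatives of a polynomial function are computed by `MvPolynomial.pderiv`, which lowers
the total degree by one.
-/

open MeasureTheory Matrix

noncomputable section

/-- The reference triangle `T̂ = {(x,y) : 0 ≤ x, 0 ≤ y, x + y ≤ 1}`. -/
def Tref : Set (ℝ × ℝ) := {z : ℝ × ℝ | 0 ≤ z.1 ∧ 0 ≤ z.2 ∧ z.1 + z.2 ≤ 1}

/-- Real polynomial functions on `ℝ²` of total degree at most `k`. -/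
def PolyFun (k : ℕ) : Set ((ℝ × ℝ) → ℝ) :=
  {f | ∃ P : MvPolynomial (Fin 2) ℝ, P.totalDegree ≤ k ∧
    ∀ z : ℝ × ℝ, f z = MvPolynomial.eval ![z.1, z.2] P}

/-- `curl φ = (∂φ/∂y, −∂φ/∂x)`. -/
def pcurl (φ : (ℝ × ℝ) → ℝ) : (ℝ × ℝ) → ℝ × ℝ :=
  fun z => (fderiv ℝ φ z (0, 1), -(fderiv ℝ φ z (1, 0)))

/-- `div v = ∂v₁/∂x + ∂v₂/∂y`. -/
def pdiv (v : (ℝ × ℝ) → ℝ × ℝ) : (ℝ × ℝ) → ℝ :=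
  fun z => fderiv ℝ (fun w => (v w).1) z (1, 0) + fderiv ℝ (fun w => (v w).2) z (0, 1)

/-- `Σ_I(T̂)`: polynomials of degree at most `k+1` with vanishing value and gradient on `∂T̂`. -/
def SigmaI (k : ℕ) : Set ((ℝ × ℝ) → ℝ) :=
  {φ | φ ∈ PolyFun (k + 1) ∧ ∀ z ∈ frontier Tref, φ z = 0 ∧ fderiv ℝ φ z = 0}

/-- `V_I(T̂)`: pairs of polynomials of degree at most `k` vanishing on `∂T̂`. -/
def VI (k : ℕ) : Set ((ℝ × ℝ) → ℝ × ℝ) :=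
  {v | (fun z => (v z).1) ∈ PolyFun k ∧ (fun z => (v z).2) ∈ PolyFun k ∧
    ∀ z ∈ frontier Tref, v z = 0}

/-- `Q_I(T̂)`: polynomials of degree at most `k−1` with vanishing mean over `T̂` and vanishing
value at the three vertices. -/
def QI (k : ℕ) : Set ((ℝ × ℝ) → ℝ) :=
  {q | q ∈ PolyFun (k - 1) ∧ (∫ z in Tref, q z) = 0 ∧
    q (0, 0) = 0 ∧ q (1, 0) = 0 ∧ q (0, 1) = 0}

/-! ### Polynomial functions and their derivatives -/

theorem totalDegree_pderiv_le (i : Fin 2) (P : MvPolynomial (Fin 2) ℝ) :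
    (MvPolynomial.pderiv i P).totalDegree ≤ P.totalDegree - 1 := by
  refine Finset.sup_le fun m hm => ?_
  have h1 : m + Finsupp.single i 1 ∈ P.support := by
    rw [MvPolynomial.mem_support_iff] at hm ⊢
    intro h0
    exact hm (by rw [MvPolynomial.coeff_pderiv, h0, zero_mul])
  have h2 := MvPolynomial.le_totalDegree h1
  rw [Finsupp.sum_add_index' (fun _ => rfl) (fun _ _ _ => rfl), Finsupp.sum_single_index rfl] at h2
  omega

/-- The differential of a bivariate polynomial function, in terms of formal partial derivatives. -/
theorem hasFDerivAt_eval (P : MvPolynomial (Fin 2) ℝ) (z : ℝ × ℝ) :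
    HasFDerivAt (fun w : ℝ × ℝ => MvPolynomial.eval ![w.1, w.2] P)
      (MvPolynomial.eval ![z.1, z.2] (MvPolynomial.pderiv 0 P) • ContinuousLinearMap.fst ℝ ℝ ℝ +
        MvPolynomial.eval ![z.1, z.2] (MvPolynomial.pderiv 1 P) •
          ContinuousLinearMap.snd ℝ ℝ ℝ) z := by
  induction P using MvPolynomial.induction_on with
  | C a => simpa using hasFDerivAt_const a z
  | add p q hp hq =>
    simp only [map_add]
    refine (hp.add hq).congr_fderiv ?_
    ext <;> simp
  | mul_X p i hp =>
    have hX : HasFDerivAt (fun w : ℝ × ℝ => ![w.1, w.2] i)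
        ((if i = 0 then 1 else 0 : ℝ) • ContinuousLinearMap.fst ℝ ℝ ℝ +
          (if i = 1 then 1 else 0 : ℝ) • ContinuousLinearMap.snd ℝ ℝ ℝ) z := by
      fin_cases i
      · simpa using hasFDerivAt_fst
      · simpa using hasFDerivAt_snd
    simp only [map_mul, MvPolynomial.eval_X]
    refine (hp.mul hX).congr_fderiv ?_
    fin_cases i <;> ext <;>
      simp [MvPolynomial.pderiv_X]

theorem continuous_evalPair (P : MvPolynomial (Fin 2) ℝ) :
    Continuous fun w : ℝ × ℝ => MvPolynomial.eval ![w.1, w.2] P :=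
  (MvPolynomial.continuous_eval P).comp (by fun_prop)

/-! ### The boundary of the reference triangle -/

theorem isClosed_Tref : IsClosed Tref :=
  (isClosed_le continuous_const continuous_fst).inter
    ((isClosed_le continuous_const continuous_snd).inter
      (isClosed_le (continuous_fst.add continuous_snd) continuous_const))

theorem isCompact_Tref : IsCompact Tref := by
  refine (isCompact_Icc (a := ((0 : ℝ), (0 : ℝ))) (b := (1, 1))).of_isClosed_subset
    isClosed_Tref ?_
  rintro ⟨x, y⟩ ⟨hx, hy, hxy⟩
  simp only at hx hy hxy
  exact ⟨⟨hx, hy⟩, ⟨by simp only; linarith, by simp only; linarith⟩⟩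

/-- A point of `Tref` from which some ray leaves `Tref` at once is a boundary point. -/
theorem mem_frontier_of_ray {z d : ℝ × ℝ} (hz : z ∈ Tref)
    (hd : ∀ t : ℝ, 0 < t → z + t • d ∉ Tref) : z ∈ frontier Tref := by
  rw [frontier_eq_closure_inter_closure]
  refine ⟨subset_closure hz, ?_⟩
  have hc : Continuous fun t : ℝ => z + t • d := by fun_prop
  have ht : Filter.Tendsto (fun t : ℝ => z + t • d) (nhdsWithin 0 (Set.Ioi 0)) (nhds z) := by
    have := hc.tendsto 0
    simp only [zero_smul, add_zero] at this
    exact this.mono_left nhdsWithin_le_nhds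
  refine mem_closure_of_tendsto ht ?_
  filter_upwards [self_mem_nhdsWithin] with t h
  exact hd t h

theorem left_mem_frontier {y : ℝ} (h0 : 0 ≤ y) (h1 : y ≤ 1) :
    ((0 : ℝ), y) ∈ frontier Tref := by
  refine mem_frontier_of_ray (d := (-1, 0)) ⟨le_rfl, h0, by simpa using h1⟩ ?_
  rintro t ht ⟨hx, -, -⟩
  simp at hx
  linarith

theorem bottom_mem_frontier {x : ℝ} (h0 : 0 ≤ x) (h1 : x ≤ 1) :
    (x, (0 : ℝ)) ∈ frontier Tref := by
  refine mem_frontier_of_ray (d := (0, -1)) ⟨h0, le_rfl, by simpa using h1⟩ ?_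
  rintro t ht ⟨-, hy, -⟩
  simp at hy
  linarith

theorem hypotenuse_mem_frontier {x y : ℝ} (hx : 0 ≤ x) (hy : 0 ≤ y) (h : x + y = 1) :
    (x, y) ∈ frontier Tref := by
  refine mem_frontier_of_ray (d := (1, 1)) ⟨hx, hy, h.le⟩ ?_
  rintro t ht ⟨-, -, hxy⟩
  simp at hxy
  linarith

/-! ### Derivatives at the vertices -/

/-- If `f` vanishes on the segment from `z` to `z + d`, its differential at `z` kills `d`. -/
theorem fderiv_apply_eq_zero_of_edge {f : ℝ × ℝ → ℝ} {L : ℝ × ℝ →L[ℝ] ℝ} {z d : ℝ × ℝ}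
    (hf : HasFDerivAt f L z) (h : ∀ t ∈ Set.Icc (0 : ℝ) 1, f (z + t • d) = 0) : L d = 0 := by
  have hline : HasDerivAt (fun t : ℝ => z + t • d) d 0 := by
    simpa using ((hasDerivAt_id (0 : ℝ)).smul_const d).const_add z
  have h1 : HasDerivAt (fun t : ℝ => f (z + t • d)) (L d) 0 :=
    HasFDerivAt.comp_hasDerivAt (0 : ℝ) (by simpa using hf) hline
  have h2 : HasDerivWithinAt (fun t : ℝ => f (z + t • d)) 0 (Set.Icc 0 1) 0 :=
    (hasDerivWithinAt_const (0 : ℝ) _ (0 : ℝ)).congr h (h 0 (by simp))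
  exact (uniqueDiffOn_Icc one_pos 0 (by simp)).eq_deriv _ h1.hasDerivWithinAt h2

/-- A function vanishing on `frontier Tref` has zero differential at each vertex, stated through
the values `a`, `b` of its partial derivatives there. -/
theorem partials_eq_zero_of_vertex {f : ℝ × ℝ → ℝ} {a b : ℝ × ℝ → ℝ}
    (hf : ∀ z, HasFDerivAt f
      (a z • ContinuousLinearMap.fst ℝ ℝ ℝ + b z • ContinuousLinearMap.snd ℝ ℝ ℝ) z)
    (h0 : ∀ z ∈ frontier Tref, f z = 0) :
    (a (0, 0) = 0 ∧ b (0, 0) = 0) ∧ (a (1, 0) = 0 ∧ b (1, 0) = 0) ∧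
      (a (0, 1) = 0 ∧ b (0, 1) = 0) := by
  have e1 := fderiv_apply_eq_zero_of_edge (d := (1, 0)) (hf (0, 0)) fun t ht =>
    h0 _ (by simpa using bottom_mem_frontier ht.1 ht.2)
  have e2 := fderiv_apply_eq_zero_of_edge (d := (0, 1)) (hf (0, 0)) fun t ht =>
    h0 _ (by simpa using left_mem_frontier ht.1 ht.2)
  have e3 := fderiv_apply_eq_zero_of_edge (d := (-1, 0)) (hf (1, 0)) fun t ht =>
    h0 _ (by simpa using bottom_mem_frontier (x := 1 + -t) (by linarith [ht.2]) (by linarith [ht.1]))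
  have e4 := fderiv_apply_eq_zero_of_edge (d := (-1, 1)) (hf (1, 0)) fun t ht =>
    by
      have hmem := hypotenuse_mem_frontier (x := 1 + -t) (y := t) (by linarith [ht.2]) ht.1 (by ring)
      exact h0 _ (by simpa using hmem)
  have e5 := fderiv_apply_eq_zero_of_edge (d := (0, -1)) (hf (0, 1)) fun t ht =>
    h0 _ (by simpa using left_mem_frontier (y := 1 + -t) (by linarith [ht.2]) (by linarith [ht.1]))
  have e6 := fderiv_apply_eq_zero_of_edge (d := (1, -1)) (hf (0, 1)) fun t ht =>
    by
      have hmem := hypotenuse_mem_frontier (x := t) (y := 1 + -t) ht.1 (by linarith [ht.2]) (by ring)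
      exact h0 _ (by simpa using hmem)
  simp at e1 e2 e3 e4 e5 e6
  refine ⟨⟨e1, e2⟩, ⟨e3, ?_⟩, ⟨?_, e5⟩⟩ <;> linarith

/-! ### Mean values over the triangle -/

/-- The integral over `Tref` of a partial derivative in the first variable vanishes when the
function vanishes on `frontier Tref`: every horizontal chord has both ends there. -/
theorem setIntegral_Tref_eq_zero {f g : ℝ × ℝ → ℝ} (hg : Continuous g)
    (hd : ∀ x y, HasDerivAt (fun s => f (s, y)) (g (x, y)) x)
    (h0 : ∀ z ∈ frontier Tref, f z = 0) : ∫ z in Tref, g z = 0 := by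
  have hm : MeasurableSet Tref := isClosed_Tref.measurableSet
  have hint : Integrable (Tref.indicator g) (volume.prod volume) :=
    (integrable_indicator_iff hm).2 (hg.continuousOn.integrableOn_compact isCompact_Tref)
  rw [← integral_indicator hm, Measure.volume_eq_prod, integral_prod_symm _ hint]
  refine integral_eq_zero_of_ae (Filter.Eventually.of_forall fun y => ?_)
  simp only [Pi.zero_apply]
  by_cases hy : 0 ≤ y ∧ y ≤ 1
  · have hslice : (fun x => Tref.indicator g (x, y)) =
        (Set.Icc 0 (1 - y)).indicator fun x => g (x, y) := by
      ext x
      have : (x, y) ∈ Tref ↔ x ∈ Set.Icc 0 (1 - y) := by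
        simp only [Tref, Set.mem_ofPred_eq, Set.mem_Icc]
        constructor
        · rintro ⟨a, -, b⟩; exact ⟨a, by linarith⟩
        · rintro ⟨a, b⟩; exact ⟨a, hy.1, by linarith⟩
      simp only [Set.indicator, this]
    have hcont : Continuous fun x => g (x, y) := by fun_prop
    rw [hslice, integral_indicator measurableSet_Icc, integral_Icc_eq_integral_Ioc,
      ← intervalIntegral.integral_of_le (by linarith [hy.2]),
      intervalIntegral.integral_eq_sub_of_hasDerivAt (fun x _ => hd x y)
        (hcont.intervalIntegrable _ _),
      h0 _ (left_mem_frontier hy.1 hy.2),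
      h0 _ (hypotenuse_mem_frontier (by linarith [hy.2]) hy.1 (by ring)), sub_zero]
  · have hslice : ∀ x, Tref.indicator g (x, y) = 0 := fun x => by
      refine Set.indicator_of_notMem ?_ _
      rintro ⟨a, b, c⟩
      simp only at a b c
      exact hy ⟨b, by linarith⟩
    simp [hslice]

theorem swap_mem_Tref {z : ℝ × ℝ} : z.swap ∈ Tref ↔ z ∈ Tref := by
  simp only [Tref, Set.mem_ofPred_eq, Prod.fst_swap, Prod.snd_swap, add_comm z.2]
  tauto

theorem swap_mem_frontier {z : ℝ × ℝ} (hz : z ∈ frontier Tref) : z.swap ∈ frontier Tref := by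
  have h : (Homeomorph.prodComm ℝ ℝ) ⁻¹' Tref = Tref := Set.ext fun _ => swap_mem_Tref
  have h2 := (Homeomorph.prodComm ℝ ℝ).preimage_frontier Tref
  rw [h] at h2
  rw [← h2] at hz
  exact hz

theorem setIntegral_Tref_swap (g : ℝ × ℝ → ℝ) :
    ∫ z in Tref, g z.swap = ∫ z in Tref, g z := by
  have hm : MeasurableSet Tref := isClosed_Tref.measurableSet
  rw [← integral_indicator hm, ← integral_indicator hm, Measure.volume_eq_prod,
    ← integral_prod_swap (Tref.indicator g)]
  congr 1
  ext z
  have h : z.swap ∈ Tref ↔ z ∈ Tref := swap_mem_Tref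
  by_cases hz : z ∈ Tref <;> simp [Set.indicator, h, hz]

/-- If `v = (v₁, v₂)` with `v₁, v₂` polynomials of degree at most `k` vanishes on `∂T̂`,
then `div v` has vanishing mean over `T̂` and vanishes at the three vertices;
in other words, `div` maps `V_I(T̂)` into `Q_I(T̂)`. -/
theorem div_maps_VI_into_QI (k : ℕ) (hk : 1 ≤ k) (v : (ℝ × ℝ) → ℝ × ℝ)
    (hv1 : (fun z => (v z).1) ∈ PolyFun k) (hv2 : (fun z => (v z).2) ∈ PolyFun k)
    (hbdry : ∀ z ∈ frontier Tref, v z = 0) :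
    (∫ z in Tref, pdiv v z) = 0 ∧
    pdiv v (0, 0) = 0 ∧ pdiv v (1, 0) = 0 ∧ pdiv v (0, 1) = 0 ∧
    pdiv v ∈ QI k := by
  obtain ⟨P, hPd, hP⟩ := hv1
  obtain ⟨Q, hQd, hQ⟩ := hv2
  have hP' : (fun z => (v z).1) = fun z : ℝ × ℝ => MvPolynomial.eval ![z.1, z.2] P := funext hP
  have hQ' : (fun z => (v z).2) = fun z : ℝ × ℝ => MvPolynomial.eval ![z.1, z.2] Q := funext hQ
  have hP0 : ∀ z ∈ frontier Tref, MvPolynomial.eval ![z.1, z.2] P = 0 := fun z hz => by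
    simpa [hbdry z hz] using (hP z).symm
  have hQ0 : ∀ z ∈ frontier Tref, MvPolynomial.eval ![z.1, z.2] Q = 0 := fun z hz => by
    simpa [hbdry z hz] using (hQ z).symm
  have hdiv : ∀ z, pdiv v z = MvPolynomial.eval ![z.1, z.2] (MvPolynomial.pderiv 0 P) +
      MvPolynomial.eval ![z.1, z.2] (MvPolynomial.pderiv 1 Q) := fun z => by
    simp only [pdiv]
    rw [hP', hQ', (hasFDerivAt_eval P z).fderiv, (hasFDerivAt_eval Q z).fderiv]
    simp
  have hcP := continuous_evalPair (MvPolynomial.pderiv 0 P)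
  have hcQ := continuous_evalPair (MvPolynomial.pderiv 1 Q)
  have hIP : ∫ z in Tref, MvPolynomial.eval ![z.1, z.2] (MvPolynomial.pderiv 0 P) = 0 := by
    refine setIntegral_Tref_eq_zero (f := fun z => MvPolynomial.eval ![z.1, z.2] P) hcP
      (fun x y => ?_) hP0
    have := (hasFDerivAt_eval P (x, y)).comp_hasDerivAt x
      ((hasDerivAt_id x).prodMk (hasDerivAt_const x y))
    simpa [Function.comp_def] using this
  have hIQ : ∫ z in Tref, MvPolynomial.eval ![z.1, z.2] (MvPolynomial.pderiv 1 Q) = 0 := by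
    rw [← setIntegral_Tref_swap]
    refine setIntegral_Tref_eq_zero
      (f := fun z => MvPolynomial.eval ![z.swap.1, z.swap.2] Q) (hcQ.comp continuous_swap)
      (fun x y => ?_) (fun z hz => hQ0 _ (swap_mem_frontier hz))
    have := (hasFDerivAt_eval Q (y, x)).comp_hasDerivAt x
      ((hasDerivAt_const x y).prodMk (hasDerivAt_id x))
    simpa [Function.comp_def] using this
  have hI : ∫ z in Tref, pdiv v z = 0 := by
    simp only [hdiv]
    rw [integral_add (hcP.continuousOn.integrableOn_compact isCompact_Tref)
      (hcQ.continuousOn.integrableOn_compact isCompact_Tref), hIP, hIQ, add_zero]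
  obtain ⟨⟨p0, -⟩, ⟨p1, -⟩, ⟨p2, -⟩⟩ := partials_eq_zero_of_vertex (hasFDerivAt_eval P) hP0
  obtain ⟨⟨-, q0⟩, ⟨-, q1⟩, ⟨-, q2⟩⟩ := partials_eq_zero_of_vertex (hasFDerivAt_eval Q) hQ0
  have d0 : pdiv v (0, 0) = 0 := by rw [hdiv, p0, q0, add_zero]
  have d1 : pdiv v (1, 0) = 0 := by rw [hdiv, p1, q1, add_zero]
  have d2 : pdiv v (0, 1) = 0 := by rw [hdiv, p2, q2, add_zero]
  refine ⟨hI, d0, d1, d2, ⟨MvPolynomial.pderiv 0 P + MvPolynomial.pderiv 1 Q, ?_, fun z => ?_⟩,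
    hI, d0, d1, d2⟩
  · refine (MvPolynomial.totalDegree_add _ _).trans (max_le ?_ ?_)
    · exact (totalDegree_pderiv_le 0 P).trans (Nat.sub_le_sub_right hPd 1)
    · exact (totalDegree_pderiv_le 1 Q).trans (Nat.sub_le_sub_right hQd 1)
  · rw [hdiv, map_add]
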